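/- arXiv:2108.01609 — 3 statements merged into one kernel-verified Lean document; each statement's English description precedes it below -/
import Mathlib

section
/- Let H be a real inner product space and P : H →ₗ[ℝ] H a symmetric linear operator. Then for all x, y ∈ H and all j, l ∈ ℕ, ⟪T_j(P) x, T_l(P) y⟫ = (1/2) · (⟪x, T_{j+l}(P) y⟫ + ⟪x, T_{|j−l|}(P) y⟫). (This is the data-driven mass matrix formula: the (j,l) block of the Gram matrix of the snapshots equals (1/2)(D_{j+l} + D_{|j−l|}), where D_k is the k-th data matrix.) -/
open Polynomial Polynomial.Chebyshev
open scoped RealInnerProductSpace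

theorem aeval_symm_aux {H : Type*} [NormedAddCommGroup H] [InnerProductSpace ℝ H]
    (P : H →ₗ[ℝ] H) (hsym : ∀ x y : H, ⟪P x, y⟫ = ⟪x, P y⟫) (p : ℝ[X]) :
    ∀ x y : H, ⟪aeval (P : Module.End ℝ H) p x, y⟫ = ⟪x, aeval (P : Module.End ℝ H) p y⟫ := by
  induction p using Polynomial.induction_on with
  | C a =>
    intro x y
    simp [Module.algebraMap_end_apply, real_inner_smul_left, real_inner_smul_right]
  | add p q hp hq =>
    intro x y
    simp only [map_add, LinearMap.add_apply, inner_add_left, inner_add_right, hp, hq]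
  | monomial n a ih =>
    intro x y
    have e1 : aeval (P : Module.End ℝ H) (Polynomial.C a * X ^ (n + 1)) x
        = aeval (P : Module.End ℝ H) (Polynomial.C a * X ^ n) (P x) := by
      rw [pow_succ, ← mul_assoc, map_mul, aeval_X, Module.End.mul_apply]
    have e2 : aeval (P : Module.End ℝ H) (Polynomial.C a * X ^ (n + 1)) y
        = P (aeval (P : Module.End ℝ H) (Polynomial.C a * X ^ n) y) := by
      rw [pow_succ', mul_left_comm, map_mul, aeval_X, Module.End.mul_apply]
    rw [e1, e2, ih, hsym]

/-- The data-driven mass matrix formula: for a symmetric operator `P` on a real inner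
product space, `⟪T_j(P) x, T_l(P) y⟫ = (1/2)(⟪x, T_{j+l}(P) y⟫ + ⟪x, T_{|j-l|}(P) y⟫)`. -/
theorem mass_matrix_formula {H : Type*} [NormedAddCommGroup H] [InnerProductSpace ℝ H]
    (P : H →ₗ[ℝ] H) (hsym : ∀ x y : H, ⟪P x, y⟫ = ⟪x, P y⟫)
    (x y : H) (j l : ℕ) :
    ⟪aeval (P : Module.End ℝ H) (T ℝ (j : ℤ)) x,
      aeval (P : Module.End ℝ H) (T ℝ (l : ℤ)) y⟫ =
    (1 / 2 : ℝ) * (⟪x, aeval (P : Module.End ℝ H) (T ℝ ((j : ℤ) + l)) y⟫ +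
      ⟪x, aeval (P : Module.End ℝ H) (T ℝ (|(j : ℤ) - l|)) y⟫) := by
  have habs : T ℝ (|(j : ℤ) - l|) = T ℝ ((j : ℤ) - l) := by
    rcases abs_choice ((j : ℤ) - l) with h | h
    · rw [h]
    · rw [h, T_neg]
  rw [habs, aeval_symm_aux P hsym, ← inner_add_right, ← LinearMap.add_apply, ← map_add,
    ← T_mul_T, mul_assoc, two_mul, map_add, LinearMap.add_apply, inner_add_right, map_mul,
    Module.End.mul_apply]
  ring
end

section
/- Under the hypotheses of Proposition 1 (H a real inner product space, P : H →ₗ[ℝ] H symmetric, snapshots u_{(l,s)} := T_l(P)(b s) for (l,s) ∈ K = Fin n × Fin m, Gram matrix M, invertible R with M = Rᵀ * R, and v_k := ∑_l (R⁻¹)_{l,k} • u_l), for every c : K → ℝ the imaging function satisfies ∑_{j ∈ Fin n} ∑_{r ∈ Fin m} ⟪b r, T_j(P) (∑_{k ∈ K} c_k • v_k)⟫² = ∑_{k ∈ K} ∑_{k' ∈ K} c_k · (R * Rᵀ)_{k,k'} · c_{k'}. (The imaging function I(y), the squared norm over all sensors and sampling times of the internal wave, is computable from the Cholesky factor R of the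 data-driven mass matrix alone, without inverting R.) -/
open Matrix Polynomial Polynomial.Chebyshev
open scoped RealInnerProductSpace

/-- The imaging function, the squared norm over all sensors and sampling times of the
internal wave, is computable from the Cholesky factor `R` of the data-driven mass matrix
alone: `∑_j ∑_r ⟪b_r, T_j(P)(∑_k c_k v_k)⟫² = ∑_k ∑_{k'} c_k (R Rᵀ)_{k,k'} c_{k'}`. -/
theorem imaging_function_formula {H : Type*} [NormedAddCommGroup H] [InnerProductSpace ℝ H]
    (P : H →ₗ[ℝ] H) (hsym : ∀ x y : H, ⟪P x, y⟫ = ⟪x, P y⟫)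
    (m n : ℕ) (b : Fin m → H)
    (u : Fin n × Fin m → H)
    (hu : ∀ (l : Fin n) (s : Fin m), u (l, s) = aeval (P : Module.End ℝ H) (T ℝ (l : ℤ)) (b s))
    (M R : Matrix (Fin n × Fin m) (Fin n × Fin m) ℝ)
    (hM : ∀ k k', M k k' = ⟪u k, u k'⟫)
    (hR : IsUnit R) (hfact : M = Rᵀ * R)
    (v : Fin n × Fin m → H) (hv : ∀ k, v k = ∑ l, R⁻¹ l k • u l)
    (c : Fin n × Fin m → ℝ) :
    ∑ j : Fin n, ∑ r : Fin m,
        ⟪b r, aeval (P : Module.End ℝ H) (T ℝ (j : ℤ)) (∑ k, c k • v k)⟫ ^ 2 =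
      ∑ k, ∑ k', c k * (R * Rᵀ) k k' * c k' := by
  have hpow : ∀ (i : ℕ) (x y : H),
      ⟪((P : Module.End ℝ H) ^ i) x, y⟫ = ⟪x, ((P : Module.End ℝ H) ^ i) y⟫ := by
    intro i
    induction i with
    | zero => intro x y; simp
    | succ i ih =>
      intro x y
      rw [pow_succ, Module.End.mul_apply, ih, hsym, ← Module.End.mul_apply, ← pow_succ',
        ← pow_succ]
  have hpoly : ∀ (p : ℝ[X]) (x y : H),
      ⟪aeval (P : Module.End ℝ H) p x, y⟫ = ⟪x, aeval (P : Module.End ℝ H) p y⟫ := by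
    intro p x y
    simp only [aeval_eq_sum_range, LinearMap.sum_apply, LinearMap.smul_apply, sum_inner,
      inner_sum, real_inner_smul_left, real_inner_smul_right, hpow]
  have hdet : IsUnit R.det := (Matrix.isUnit_iff_isUnit_det R).1 hR
  have hMR : M * R⁻¹ = Rᵀ := by
    rw [hfact, Matrix.mul_assoc, Matrix.mul_nonsing_inv R hdet, Matrix.mul_one]
  have huv : ∀ p k, ⟪u p, v k⟫ = R k p := by
    intro p k
    rw [hv, inner_sum]
    have h := congrFun (congrFun hMR p) k
    rw [Matrix.mul_apply, Matrix.transpose_apply] at h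
    rw [← h]
    refine Finset.sum_congr rfl fun l _ => ?_
    rw [real_inner_smul_right, hM, mul_comm]
  have hg : ∀ (j : Fin n) (r : Fin m),
      ⟪b r, aeval (P : Module.End ℝ H) (T ℝ (j : ℤ)) (∑ k, c k • v k)⟫
        = ∑ k, c k * R k (j, r) := by
    intro j r
    rw [← hpoly, ← hu, inner_sum]
    simp only [real_inner_smul_right, huv]
  simp only [hg]
  rw [← Fintype.sum_prod_type' (f := fun j r => (∑ k, c k * R k (j, r)) ^ 2)]
  simp only [sq, Finset.sum_mul_sum, Matrix.mul_apply, Matrix.transpose_apply, Finset.mul_sum,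
    Finset.sum_mul]
  rw [Finset.sum_comm]
  refine Finset.sum_congr rfl fun k _ => ?_
  rw [Finset.sum_comm]
  refine Finset.sum_congr rfl fun k' _ => Finset.sum_congr rfl fun p _ => ?_
  ring
end

section
/- Let 𝔸 be a complete normed real algebra with unit and a ∈ 𝔸, and define C : ℝ → 𝔸 by C(t) := ∑'_{n ∈ ℕ} ((−1)^n · t^(2n) / (2n)!) • a^n. Then for every k ∈ ℕ and every t ∈ ℝ, C(k · t) = (Polynomial.Chebyshev.T ℝ k).aeval (C(t)), i.e. the propagation over k time steps is the k-th Chebyshev polynomial of the first kind evaluated at the one-step propagator C(t). (This is the operator analogue of cos(kθ) = T_k(cos θ); it expresses the wave snapshots u_k = cos(kτ√A) b as Chebyshev polynomials of the propagator P = cos(τ√A) applied to the initial state.) -/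
open Polynomial Polynomial.Chebyshev

theorem aux_sum_split (f : ℕ → ℝ) (n : ℕ) :
    ∑ m ∈ Finset.range (2 * n + 1), f m =
      ∑ i ∈ Finset.range (n + 1), f (2 * i) + ∑ i ∈ Finset.range n, f (2 * i + 1) := by
  induction n with
  | zero => simp
  | succ n ih =>
    rw [show 2 * (n + 1) + 1 = (2 * n + 1) + 1 + 1 by ring, Finset.sum_range_succ,
      Finset.sum_range_succ, ih, Finset.sum_range_succ _ (n + 1), Finset.sum_range_succ _ n,
      Finset.sum_range_succ _ n, show 2 * (n + 1) = 2 * n + 1 + 1 by ring]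
    ring

theorem aux_binom (s t : ℝ) (n : ℕ) :
    2 * ∑ p ∈ Finset.HasAntidiagonal.antidiagonal n,
      (s ^ (2 * p.1) / (Nat.factorial (2 * p.1) : ℝ)) *
      (t ^ (2 * p.2) / (Nat.factorial (2 * p.2) : ℝ)) =
    ((s + t) ^ (2 * n) + (s - t) ^ (2 * n)) / (Nat.factorial (2 * n) : ℝ) := by
  have hf : ∀ m : ℕ, (Nat.factorial m : ℝ) ≠ 0 := fun m => by
    exact_mod_cast Nat.factorial_ne_zero m
  rw [eq_div_iff (hf _), add_comm s t, show s - t = -t + s by ring, add_comm t s,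
    add_comm (-t) s, add_pow, add_pow, ← Finset.sum_add_distrib, aux_sum_split,
    Finset.Nat.sum_antidiagonal_eq_sum_range_succ_mk]
  have h0 : ∑ i ∈ Finset.range n,
      (s ^ (2 * i + 1) * t ^ (2 * n - (2 * i + 1)) * ((2 * n).choose (2 * i + 1) : ℝ) +
      s ^ (2 * i + 1) * (-t) ^ (2 * n - (2 * i + 1)) * ((2 * n).choose (2 * i + 1) : ℝ)) = 0 := by
    refine Finset.sum_eq_zero fun i hi => ?_
    have hi := Finset.mem_range.1 hi
    have ho : Odd (2 * n - (2 * i + 1)) := ⟨n - i - 1, by omega⟩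
    rw [ho.neg_pow]; ring
  rw [h0, add_zero, Finset.mul_sum, Finset.sum_mul]
  refine Finset.sum_congr rfl fun i hi => ?_
  have hi := Finset.mem_range.1 hi
  have he : Even (2 * n - 2 * i) := ⟨n - i, by omega⟩
  rw [he.neg_pow, Nat.cast_choose ℝ (by omega : 2 * i ≤ 2 * n), ← Nat.mul_sub]
  have h1 := hf (2 * i)
  have h2 := hf (2 * (n - i))
  field_simp
  ring

theorem aux_summable {𝔸 : Type*} [NormedRing 𝔸] [NormedAlgebra ℝ 𝔸]
    [CompleteSpace 𝔸] (a : 𝔸) (t : ℝ) :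
    Summable fun n : ℕ =>
      ‖(((-1 : ℝ) ^ n * t ^ (2 * n) / (Nat.factorial (2 * n) : ℝ)) • a ^ n)‖ := by
  refine Summable.of_nonneg_of_le (fun _ => norm_nonneg _) (fun n => ?_)
    (NormedSpace.norm_expSeries_summable' (𝕂 := ℝ) ((t ^ 2) • a))
  rw [_root_.smul_pow, smul_smul, norm_smul, norm_smul]
  refine mul_le_mul_of_nonneg_right ?_ (norm_nonneg _)
  have h : (Nat.factorial n : ℝ) ≤ (Nat.factorial (2 * n) : ℝ) := by
    exact_mod_cast Nat.factorial_le (by omega)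
  have h0 : (0 : ℝ) < Nat.factorial n := by exact_mod_cast Nat.factorial_pos n
  simp only [norm_div, norm_mul, norm_pow, norm_neg, norm_one, one_pow, one_mul, norm_inv,
    Real.norm_natCast, ← pow_mul]
  rw [div_eq_inv_mul]
  gcongr

theorem aux_dalembert {𝔸 : Type*} [NormedRing 𝔸] [NormedAlgebra ℝ 𝔸]
    [CompleteSpace 𝔸] (a : 𝔸) (C : ℝ → 𝔸)
    (hC : ∀ t : ℝ, C t =
      ∑' n : ℕ, (((-1 : ℝ) ^ n * t ^ (2 * n) / (Nat.factorial (2 * n) : ℝ)) • a ^ n))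
    (s t : ℝ) : C (s + t) + C (s - t) = 2 * (C s * C t) := by
  rw [hC (s + t), hC (s - t), hC s, hC t,
    tsum_mul_tsum_eq_tsum_sum_antidiagonal_of_summable_norm (aux_summable a s) (aux_summable a t),
    ← Summable.tsum_add (aux_summable a _).of_norm (aux_summable a _).of_norm,
    show (2 : 𝔸) = algebraMap ℝ 𝔸 2 from (map_ofNat (algebraMap ℝ 𝔸) 2).symm, ← Algebra.smul_def, ← tsum_const_smul'']
  refine tsum_congr fun n => ?_
  have : ∑ p ∈ Finset.HasAntidiagonal.antidiagonal n,
      (((-1 : ℝ) ^ p.1 * s ^ (2 * p.1) / (Nat.factorial (2 * p.1) : ℝ)) • a ^ p.1) *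
      (((-1 : ℝ) ^ p.2 * t ^ (2 * p.2) / (Nat.factorial (2 * p.2) : ℝ)) • a ^ p.2) =
      ((-1 : ℝ) ^ n * ∑ p ∈ Finset.HasAntidiagonal.antidiagonal n,
      (s ^ (2 * p.1) / (Nat.factorial (2 * p.1) : ℝ)) *
      (t ^ (2 * p.2) / (Nat.factorial (2 * p.2) : ℝ))) • a ^ n := by
    rw [Finset.mul_sum, Finset.sum_smul]
    refine Finset.sum_congr rfl fun p hp => ?_
    rw [smul_mul_smul_comm, ← pow_add, Finset.HasAntidiagonal.mem_antidiagonal.1 hp,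
      ← Finset.HasAntidiagonal.mem_antidiagonal.1 hp, pow_add (-1 : ℝ)]
    congr 1
    ring
  rw [this, smul_smul, ← add_smul, mul_left_comm, aux_binom]
  congr 1
  ring

/-- Operator analogue of `cos (kθ) = T_k (cos θ)`: with
`C t = ∑' n, ((-1)^n t^(2n)/(2n)!) • a^n` representing `cos (t √a)`, the propagation over
`k` time steps is the `k`-th Chebyshev polynomial of the first kind evaluated at the
one-step propagator: `C (k t) = T_k (C t)`. -/
theorem operator_cos_nat_mul_eq_chebyshev {𝔸 : Type*} [NormedRing 𝔸] [NormedAlgebra ℝ 𝔸]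
    [CompleteSpace 𝔸] (a : 𝔸) (C : ℝ → 𝔸)
    (hC : ∀ t : ℝ, C t =
      ∑' n : ℕ, (((-1 : ℝ) ^ n * t ^ (2 * n) / (Nat.factorial (2 * n) : ℝ)) • a ^ n)) :
    ∀ (k : ℕ) (t : ℝ), C (k * t) = aeval (C t) (T ℝ (k : ℤ)) := by
  intro k t
  induction k using Nat.strong_induction_on with
  | _ k ih =>
    match k, ih with
    | 0, _ =>
      simp only [Nat.cast_zero, zero_mul, T_zero, map_one]
      rw [hC, tsum_eq_single 0]
      · simp
      · intro n hn
        simp [hn]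
    | 1, _ => simp
    | k + 2, ih =>
      have h0 := ih k (by omega)
      have h1 := ih (k + 1) (by omega)
      have h := aux_dalembert a C hC t ((k + 1 : ℕ) * t)
      have h' := aux_dalembert a C hC ((k + 1 : ℕ) * t) t
      rw [show ((k + 1 : ℕ) : ℝ) * t + t = ((k + 2 : ℕ) : ℝ) * t by push_cast; ring,
        show ((k + 1 : ℕ) : ℝ) * t - t = (k : ℝ) * t by push_cast; ring] at h'
      have hc : C ((k + 1 : ℕ) * t) * C t = C t * C ((k + 1 : ℕ) * t) := by
        rw [h1]
        conv_lhs => rw [← aeval_X (R := ℝ) (C t)]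
        conv_rhs => rw [← aeval_X (R := ℝ) (C t)]
        simp only [aeval_X]
        have := congrArg (aeval (C t)) (mul_comm (T ℝ ((k + 1 : ℕ) : ℤ)) X)
        simpa only [map_mul, aeval_X] using this
      rw [eq_sub_of_add_eq h', hc]
      push_cast at *
      rw [T_add_two, map_sub, map_mul, map_mul, aeval_X, ← h0, ← h1, mul_assoc]
      rw [map_ofNat (aeval (C t)) 2]
end
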